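/- arXiv:1707.07764 — 3 statements merged into one kernel-verified Lean document; each statement's English description precedes it below -/
import Mathlib

section
/- The exponential exp(t·ι_ξ) := Σ_{k=0}^{n} (t^k/k!) · ι_ξ^k (a finite sum, since ι_ξ^{n+1} = 0) is, for each t ∈ ℝ, an algebra automorphism of Λ: exp(t·ι_ξ)(x * y) = exp(t·ι_ξ)(x) * exp(t·ι_ξ)(y) for all x, y ∈ Λ, and exp(t·ι_ξ) ∘ exp(−t·ι_ξ) = id. (This makes rigorous the superfield transformation e^{ι_ξ}𝔹 used in the paper.) -/
noncomputable section

open ExteriorAlgebra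

variable (E G : Type) [AddCommGroup E] [Module ℝ E] [AddCommGroup G] [Module ℝ G]

/-- The ghost generator `θ = ι(0, g)`. -/
def ghost (g : G) : ExteriorAlgebra ℝ (E × G) := ExteriorAlgebra.ι ℝ ((0 : E), g)

/-- The extension `f̃(e, g) = f(e)` of a covector on `E` to `E × G`. -/
def fTilde (f : Module.Dual ℝ E) : Module.Dual ℝ (E × G) := f.comp (LinearMap.fst ℝ E G)

/-- The odd contraction `ι_ξ x = Σ_i θ_i * ∂_i x`. -/
def iotaXi {k : ℕ} (g : Fin k → G) (f : Fin k → Module.Dual ℝ E) :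
    ExteriorAlgebra ℝ (E × G) →ₗ[ℝ] ExteriorAlgebra ℝ (E × G) :=
  ∑ i, (LinearMap.mulLeft ℝ (ghost E G (g i))).comp
    (CliffordAlgebra.contractLeft (fTilde E G (f i)))

/-- The algebra map `Λ(E) → Λ(E × G)` induced by `e ↦ (e, 0)`. -/
def inclE : ExteriorAlgebra ℝ E →ₐ[ℝ] ExteriorAlgebra ℝ (E × G) :=
  ExteriorAlgebra.lift ℝ ⟨(ExteriorAlgebra.ι ℝ).comp (LinearMap.inl ℝ E G),
    fun _ => ExteriorAlgebra.ι_sq_zero _⟩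

/-- `x ∈ Λ(E × G)` has `E`-degree `p` if it is the image of an element of the `p`-th
exterior power of `E` under the algebra map induced by `e ↦ (e, 0)`. -/
def HasEDegree (p : ℕ) (x : ExteriorAlgebra ℝ (E × G)) : Prop :=
  x ∈ Submodule.map (inclE E G).toLinearMap (⋀[ℝ]^p E)

/-- The exponential `exp(t·ι_ξ) = Σ_{k=0}^{n} (t^k/k!) · ι_ξ^k`, a finite sum since
`ι_ξ^{n+1} = 0` (where `n = dim E`). -/
def expIota {k : ℕ} (g : Fin k → G) (f : Fin k → Module.Dual ℝ E) (t : ℝ) :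
    ExteriorAlgebra ℝ (E × G) →ₗ[ℝ] ExteriorAlgebra ℝ (E × G) :=
  ∑ j ∈ Finset.range (Module.finrank ℝ E + 1),
    (t ^ j / (j.factorial : ℝ)) • iotaXi E G g f ^ j

/-!
The operator `D = Σ ι(a_i) * ∂_{d_i}` is a derivation of the exterior algebra, because left
multiplication by `ι(a_i)` and the contraction `∂_{d_i}` are both odd. When `d_i(a_j) = 0` for all
`i, j`, its summands commute and square to zero. Expanding the `d_i` in a basis of their span
leaves only `r = dim span {d_i}` such summands, so every monomial in `D ^ (r + 1)` repeats one of
them and `D ^ (r + 1) = 0`. Hence the truncated series is the exponential of a nilpotent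
derivation, which is an automorphism.
-/

open Module

theorem sum_pow_card_add_one_eq_zero {A κ : Type*} [Semiring A] {T : κ → A}
    (hcomm : ∀ i j, Commute (T i) (T j)) (hsq : ∀ i, T i ^ 2 = 0) (s : Finset κ) :
    (∑ i ∈ s, T i) ^ (s.card + 1) = 0 := by
  classical
  induction s using Finset.induction_on with
  | empty => simp
  | insert i s hi ih =>
    rw [Finset.sum_insert hi, Finset.card_insert_of_notMem hi]
    have hcomm_sum : Commute (T i) (∑ j ∈ s, T j) :=
      Commute.sum_right s T (T i) fun j _ => hcomm i j
    exact hcomm_sum.add_pow_eq_zero_of_add_le_succ_of_pow_eq_zero (hsq i) ih (by lia)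

section RankOneDerivation

variable {R M : Type*} [CommRing R] [AddCommGroup M] [Module R M]

/-- The operator `x ↦ ι(a) * ∂_d x` on the exterior algebra of `M`, bilinear in `a` and `d`. It is
the derivation extending the endomorphism `v ↦ d(v) a` of `M`, of rank at most one. -/
def rankOneDerivation : M →ₗ[R] Dual R M →ₗ[R] End R (ExteriorAlgebra R M) :=
  (LinearMap.llcomp R _ _ _).compl₁₂ (LinearMap.mul R (ExteriorAlgebra R M) ∘ₗ ι R)
    CliffordAlgebra.contractLeft

theorem rankOneDerivation_apply (a : M) (d : Dual R M) (x : ExteriorAlgebra R M) :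
    rankOneDerivation a d x = ι R a * CliffordAlgebra.contractLeft d x :=
  rfl

theorem ι_mul_ι_mul_swap (a b : M) (x : ExteriorAlgebra R M) :
    ι R a * (ι R b * x) = -(ι R b * (ι R a * x)) := by
  rw [← mul_assoc, ← mul_assoc, ← neg_mul, eq_neg_of_add_eq_zero_left (ι_add_mul_swap a b)]

theorem rankOneDerivation_algebraMap (a : M) (d : Dual R M) (r : R) :
    rankOneDerivation a d (algebraMap R _ r) = 0 := by
  rw [rankOneDerivation_apply, CliffordAlgebra.contractLeft_algebraMap, mul_zero]

theorem rankOneDerivation_ι_mul (a : M) (d : Dual R M) (v : M) (x : ExteriorAlgebra R M) :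
    rankOneDerivation a d (ι R v * x) = d v • (ι R a * x) + ι R v * rankOneDerivation a d x := by
  rw [rankOneDerivation_apply, rankOneDerivation_apply, CliffordAlgebra.contractLeft_ι_mul,
    mul_sub, mul_smul_comm, ι_mul_ι_mul_swap a v, sub_neg_eq_add]

theorem rankOneDerivation_mul (a : M) (d : Dual R M) (x y : ExteriorAlgebra R M) :
    rankOneDerivation a d (x * y) =
      x * rankOneDerivation a d y + rankOneDerivation a d x * y := by
  induction x using CliffordAlgebra.left_induction with
  | algebraMap r =>
    rw [rankOneDerivation_algebraMap, zero_mul, add_zero, ← Algebra.smul_def, ← Algebra.smul_def,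
      map_smul]
  | add x₁ x₂ h₁ h₂ =>
    rw [add_mul, map_add, map_add, h₁, h₂]
    noncomm_ring
  | ι_mul x v hx =>
    rw [mul_assoc, rankOneDerivation_ι_mul, rankOneDerivation_ι_mul, hx, add_mul, smul_mul_assoc]
    noncomm_ring

theorem rankOneDerivation_rankOneDerivation {a b : M} {d e : Dual R M} (hdb : d b = 0)
    (x : ExteriorAlgebra R M) :
    rankOneDerivation a d (rankOneDerivation b e x) =
      ι R b * (ι R a * CliffordAlgebra.contractLeft d (CliffordAlgebra.contractLeft e x)) := by
  rw [rankOneDerivation_apply b, rankOneDerivation_ι_mul, hdb, zero_smul, zero_add,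
    rankOneDerivation_apply]

theorem commute_rankOneDerivation {a b : M} {d e : Dual R M} (hdb : d b = 0) (hea : e a = 0) :
    Commute (rankOneDerivation a d) (rankOneDerivation b e) := by
  refine LinearMap.ext fun x => ?_
  rw [End.mul_apply, End.mul_apply, rankOneDerivation_rankOneDerivation hdb,
    rankOneDerivation_rankOneDerivation hea, ι_mul_ι_mul_swap, CliffordAlgebra.contractLeft_comm,
    mul_neg, mul_neg, neg_neg]

theorem rankOneDerivation_sq {a : M} {d : Dual R M} (hda : d a = 0) :
    rankOneDerivation a d ^ 2 = 0 := by
  refine LinearMap.ext fun x => ?_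
  rw [sq, End.mul_apply, rankOneDerivation_rankOneDerivation hda, ← mul_assoc, ι_sq_zero, zero_mul,
    LinearMap.zero_apply]

variable {κ : Type*} [Fintype κ]

theorem sum_rankOneDerivation_mul (a : κ → M) (d : κ → Dual R M) (x y : ExteriorAlgebra R M) :
    (∑ i, rankOneDerivation (a i) (d i)) (x * y) =
      x * (∑ i, rankOneDerivation (a i) (d i)) y + (∑ i, rankOneDerivation (a i) (d i)) x * y := by
  simp only [LinearMap.sum_apply, rankOneDerivation_mul, Finset.sum_add_distrib, Finset.mul_sum,
    Finset.sum_mul]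

theorem sum_rankOneDerivation_pow_card_add_one {a : κ → M} {d : κ → Dual R M}
    (hda : ∀ i j, d i (a j) = 0) :
    (∑ i, rankOneDerivation (a i) (d i)) ^ (Fintype.card κ + 1) = 0 :=
  sum_pow_card_add_one_eq_zero (fun i j => commute_rankOneDerivation (hda i j) (hda j i))
    (fun i => rankOneDerivation_sq (hda i i)) Finset.univ

theorem exists_sum_rankOneDerivation_eq_of_mem_span {μ : Type*} [Fintype μ] (a : κ → M)
    {d : κ → Dual R M} {e : μ → Dual R M} (hd : ∀ i, d i ∈ Submodule.span R (Set.range e)) :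
    ∃ c : κ → μ → R, ∑ i, rankOneDerivation (a i) (d i) =
      ∑ j, rankOneDerivation (∑ i, c i j • a i) (e j) := by
  choose c hc using fun i => (Submodule.mem_span_range_iff_exists_fun R).1 (hd i)
  refine ⟨c, ?_⟩
  calc ∑ i, rankOneDerivation (a i) (d i)
      = ∑ i, ∑ j, c i j • rankOneDerivation (a i) (e j) := by
        simp only [← hc, map_sum, map_smul]
    _ = ∑ j, ∑ i, c i j • rankOneDerivation (a i) (e j) := Finset.sum_comm
    _ = ∑ j, rankOneDerivation (∑ i, c i j • a i) (e j) := by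
        simp only [map_sum, map_smul, LinearMap.sum_apply, LinearMap.smul_apply]

theorem sum_rankOneDerivation_pow_finrank_span_add_one {K V : Type*} [Field K] [AddCommGroup V]
    [Module K V] {a : κ → V} {d : κ → Dual K V} (hda : ∀ i j, d i (a j) = 0) :
    (∑ i, rankOneDerivation (a i) (d i)) ^
      (finrank K (Submodule.span K (Set.range d)) + 1) = 0 := by
  have := FiniteDimensional.span_of_finite K (Set.finite_range d)
  obtain ⟨e, e_mem_range, span_e, -⟩ := Submodule.exists_fun_fin_finrank_span_eq K (Set.range d)
  have d_mem_span (i : κ) : d i ∈ Submodule.span K (Set.range e) :=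
    span_e.ge (Submodule.subset_span (Set.mem_range_self i))
  have e_apply_eq_zero (j : Fin _) (i : κ) : e j (a i) = 0 := by
    obtain ⟨l, hl⟩ := e_mem_range j
    rw [← hl, hda]
  obtain ⟨c, hc⟩ := exists_sum_rankOneDerivation_eq_of_mem_span a d_mem_span
  have hpow : (∑ j, rankOneDerivation (∑ i, c i j • a i) (e j)) ^ (Fintype.card (Fin _) + 1) = 0 :=
    sum_rankOneDerivation_pow_card_add_one fun j l => by
      simp only [map_sum, map_smul, e_apply_eq_zero, smul_zero, Finset.sum_const_zero]
  rwa [← hc, Fintype.card_fin] at hpow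

end RankOneDerivation

section TruncatedExp

variable {K A : Type*} [Field K] [Ring A] [Algebra K A]

/-- The exponential series of `t • a` cut off before the term of degree `n`; it is the exponential
as soon as `a ^ n = 0`. -/
def truncatedExp (n : ℕ) (a : A) (t : K) : A :=
  ∑ j ∈ Finset.range n, (t ^ j / (j.factorial : K)) • a ^ j

variable [CharZero K]

theorem truncatedExp_eq_exp [Module ℚ A] {n : ℕ} {a : A} (ha : a ^ n = 0) (t : K) :
    truncatedExp n a t = IsNilpotent.exp (t • a) := by
  have hta : (t • a) ^ n = 0 := by rw [smul_pow, ha, smul_zero]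
  rw [IsNilpotent.exp_eq_sum hta]
  refine Finset.sum_congr rfl fun j _ => ?_
  rw [smul_pow, ← Rat.cast_smul_eq_qsmul K, smul_smul, Rat.cast_inv, Rat.cast_natCast,
    div_eq_inv_mul]

theorem truncatedExp_mul_truncatedExp_neg {n : ℕ} {a : A} (ha : a ^ n = 0) (t : K) :
    truncatedExp n a t * truncatedExp n a (-t) = 1 := by
  let _ : Module ℚ A := Module.compHom A (algebraMap ℚ K)
  have hta : IsNilpotent (t • a) := ⟨n, by rw [smul_pow, ha, smul_zero]⟩
  rw [truncatedExp_eq_exp ha, truncatedExp_eq_exp ha, neg_smul,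
    IsNilpotent.exp_mul_exp_neg_self hta]

theorem truncatedExp_apply_mul_of_derivation {n : ℕ} {D : End K A}
    (hD : ∀ x y, D (x * y) = x * D y + D x * y) (hn : D ^ n = 0) (t : K) (x y : A) :
    truncatedExp n D t (x * y) = truncatedExp n D t x * truncatedExp n D t y := by
  let _ : Module ℚ A := Module.compHom A (algebraMap ℚ K)
  have htD : IsNilpotent (t • D) := ⟨n, by rw [smul_pow, hn, smul_zero]⟩
  rw [truncatedExp_eq_exp hn]
  refine End.exp_mul_of_derivation K A (t • D) (fun x y => ?_) htD x y
  simp only [LinearMap.smul_apply, hD, smul_add, mul_smul_comm, smul_mul_assoc]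

end TruncatedExp

theorem finrank_span_range_comp_le {K V W κ : Type*} [Field K] [AddCommGroup V] [Module K V]
    [AddCommGroup W] [Module K W] [FiniteDimensional K W] (L : V →ₗ[K] W) (f : κ → Dual K W) :
    finrank K (Submodule.span K (Set.range fun i => f i ∘ₗ L)) ≤ finrank K W := by
  have hle : Submodule.span K (Set.range fun i => f i ∘ₗ L) ≤ LinearMap.range L.dualMap :=
    Submodule.span_le.2 (Set.range_subset_iff.2 fun i => ⟨f i, rfl⟩)
  calc finrank K (Submodule.span K (Set.range fun i => f i ∘ₗ L))
      ≤ finrank K (LinearMap.range L.dualMap) := Submodule.finrank_mono hle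
    _ ≤ finrank K (Dual K W) := LinearMap.finrank_range_le L.dualMap
    _ = finrank K W := Subspace.dual_finrank_eq

theorem expIota_isAlgAut_general {K V κ : Type*} [Field K] [CharZero K] [AddCommGroup V]
    [Module K V] [Fintype κ] {a : κ → V} {d : κ → Dual K V} (hda : ∀ i j, d i (a j) = 0) {n : ℕ}
    (hn : finrank K (Submodule.span K (Set.range d)) ≤ n) (t : K) :
    (∀ x y : ExteriorAlgebra K V,
      truncatedExp (n + 1) (∑ i, rankOneDerivation (a i) (d i)) t (x * y) =
        truncatedExp (n + 1) (∑ i, rankOneDerivation (a i) (d i)) t x *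
          truncatedExp (n + 1) (∑ i, rankOneDerivation (a i) (d i)) t y) ∧
    ∀ x : ExteriorAlgebra K V,
      truncatedExp (n + 1) (∑ i, rankOneDerivation (a i) (d i)) t
        (truncatedExp (n + 1) (∑ i, rankOneDerivation (a i) (d i)) (-t) x) = x := by
  have hnil : (∑ i, rankOneDerivation (a i) (d i)) ^ (n + 1) = 0 :=
    pow_eq_zero_of_le (Nat.succ_le_succ hn) (sum_rankOneDerivation_pow_finrank_span_add_one hda)
  exact ⟨truncatedExp_apply_mul_of_derivation (sum_rankOneDerivation_mul a d) hnil t,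
    LinearMap.congr_fun (truncatedExp_mul_truncatedExp_neg hnil t)⟩

/-- For each `t ∈ ℝ`, `exp(t·ι_ξ)` is an algebra automorphism of `Λ`:
it is multiplicative, and `exp(t·ι_ξ) ∘ exp(−t·ι_ξ) = id`. -/
theorem expIota_isAlgAut [FiniteDimensional ℝ E] [FiniteDimensional ℝ G]
    {k : ℕ} (g : Fin k → G) (f : Fin k → Module.Dual ℝ E) (t : ℝ) :
    (∀ x y : ExteriorAlgebra ℝ (E × G),
      expIota E G g f t (x * y) = expIota E G g f t x * expIota E G g f t y) ∧
    ∀ x : ExteriorAlgebra ℝ (E × G),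
      expIota E G g f t (expIota E G g f (-t) x) = x :=
  expIota_isAlgAut_general (a := fun i => ((0 : E), g i)) (fun i _ => map_zero (f i))
    (finrank_span_range_comp_le (LinearMap.fst ℝ E G) f) t
end
end

section
/- If α ∈ Λ has E-degree p and β ∈ Λ has E-degree q with p + q = n + 2, then ι_ξ²(α) * β + 2 · ι_ξ(α) * ι_ξ(β) + α * ι_ξ²(β) = 0. (This is the paper's identity 0 = ι_ξ²(α∧β) = 2ι_ξα∧ι_ξβ + ι_ξ²α∧β + α∧ι_ξ²β for (top+2)-forms contracted twice with the odd vector field ξ.) -/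
noncomputable section

open ExteriorAlgebra

variable (E G : Type) [AddCommGroup E] [Module ℝ E] [AddCommGroup G] [Module ℝ G]

/-!
Each summand `x ↦ θᵢ * ∂ᵢ x` of `ι_ξ` is an even derivation: the sign that the antiderivation `∂ᵢ`
produces when it passes `x` is the sign that `θᵢ` produces when it is moved back across `x`. Hence
`ι_ξ` is a derivation of the noncommutative algebra `Λ`, and expanding `ι_ξ²(α * β)` by the Leibniz
rule gives exactly the three terms of the identity. Since `α * β` has `E`-degree above `dim E`, it
vanishes.
-/

section Clifford

variable {R M : Type*} [CommRing R] [AddCommGroup M] [Module R M]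

open CliffordAlgebra (involute)

theorem contractLeft_mul {Q : QuadraticForm R M} (d : Module.Dual R M) (x y : CliffordAlgebra Q) :
    CliffordAlgebra.contractLeft d (x * y) =
      CliffordAlgebra.contractLeft d x * y + involute x * CliffordAlgebra.contractLeft d y := by
  induction x using CliffordAlgebra.left_induction with
  | algebraMap r =>
    rw [CliffordAlgebra.contractLeft_algebraMap_mul, CliffordAlgebra.contractLeft_algebraMap,
      AlgHom.commutes, zero_mul, zero_add]
  | add x x' hx hx' => simp only [add_mul, map_add, hx, hx', add_add_add_comm]
  | ι_mul x v hx =>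
    rw [mul_assoc, CliffordAlgebra.contractLeft_ι_mul, CliffordAlgebra.contractLeft_ι_mul, hx,
      map_mul, CliffordAlgebra.involute_ι, sub_mul, smul_mul_assoc]
    noncomm_ring

theorem ι_mul_involute (v : M) (x : ExteriorAlgebra R M) : ι R v * involute x = x * ι R v := by
  induction x using CliffordAlgebra.left_induction with
  | algebraMap r => rw [AlgHom.commutes, Algebra.commutes]
  | add x y hx hy => rw [map_add, mul_add, add_mul, hx, hy]
  | ι_mul x w hx =>
    have anticomm : ι R v * ι R w = -(ι R w * ι R v) :=
      eq_neg_of_add_eq_zero_left (ι_add_mul_swap v w)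
    rw [map_mul, CliffordAlgebra.involute_ι, neg_mul, mul_neg, ← mul_assoc, anticomm, neg_mul,
      neg_neg, mul_assoc, hx, mul_assoc]

theorem ι_mul_contractLeft_mul (v : M) (d : Module.Dual R M) (x y : ExteriorAlgebra R M) :
    ι R v * CliffordAlgebra.contractLeft d (x * y) =
      ι R v * CliffordAlgebra.contractLeft d x * y +
        x * (ι R v * CliffordAlgebra.contractLeft d y) := by
  rw [contractLeft_mul, mul_add, ← mul_assoc, ← mul_assoc, ι_mul_involute, mul_assoc x]

end Clifford

theorem sq_apply_mul_of_leibniz {R A : Type*} [Semiring R] [NonUnitalNonAssocSemiring A]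
    [Module R A] {D : Module.End R A} (hD : ∀ x y, D (x * y) = D x * y + x * D y) (x y : A) :
    (D ^ 2) (x * y) = (D ^ 2) x * y + 2 • (D x * D y) + x * (D ^ 2) y := by
  simp only [pow_two, Module.End.mul_apply, hD, map_add, two_nsmul, add_assoc]

theorem exteriorPower_eq_bot_of_finrank_lt {R M : Type*} [CommRing R] [Nontrivial R]
    [AddCommGroup M] [Module R M] [Module.Free R M] [Module.Finite R M] {m : ℕ}
    (hm : Module.finrank R M < m) : ⋀[R]^m M = ⊥ := by
  rw [← Submodule.subsingleton_iff_eq_bot, ← Module.finrank_eq_zero_iff_of_free R,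
    exteriorPower.finrank_eq, Nat.choose_eq_zero_of_lt hm]

section Contraction

variable {E G}
variable {p q : ℕ} {α β : ExteriorAlgebra ℝ (E × G)}

theorem HasEDegree.mul (hα : HasEDegree E G p α) (hβ : HasEDegree E G q β) :
    HasEDegree E G (p + q) (α * β) := by
  obtain ⟨a, ha, rfl⟩ := hα
  obtain ⟨b, hb, rfl⟩ := hβ
  exact ⟨a * b, SetLike.mul_mem_graded ha hb, map_mul (inclE E G) a b⟩

theorem HasEDegree.eq_zero_of_finrank_lt [FiniteDimensional ℝ E] (hα : HasEDegree E G p α)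
    (hp : Module.finrank ℝ E < p) : α = 0 := by
  rwa [HasEDegree, exteriorPower_eq_bot_of_finrank_lt hp, Submodule.map_bot,
    Submodule.mem_bot] at hα

variable {k : ℕ} (g : Fin k → G) (f : Fin k → Module.Dual ℝ E)

theorem iotaXi_apply (x : ExteriorAlgebra ℝ (E × G)) :
    iotaXi E G g f x =
      ∑ i, ghost E G (g i) * CliffordAlgebra.contractLeft (fTilde E G (f i)) x := by
  simp only [iotaXi, LinearMap.sum_apply, LinearMap.comp_apply, LinearMap.mulLeft_apply]

theorem iotaXi_mul (x y : ExteriorAlgebra ℝ (E × G)) :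
    iotaXi E G g f (x * y) = iotaXi E G g f x * y + x * iotaXi E G g f y := by
  simp only [iotaXi_apply, ghost, ι_mul_contractLeft_mul, Finset.sum_add_distrib, Finset.sum_mul,
    Finset.mul_sum]

end Contraction

theorem iotaXi_sq_top_plus_two_general [FiniteDimensional ℝ E]
    {k : ℕ} (g : Fin k → G) (f : Fin k → Module.Dual ℝ E)
    (p q : ℕ) (α β : ExteriorAlgebra ℝ (E × G))
    (hα : HasEDegree E G p α) (hβ : HasEDegree E G q β)
    (hpq : Module.finrank ℝ E < p + q) :
    (iotaXi E G g f ^ 2) α * β + 2 • (iotaXi E G g f α * iotaXi E G g f β) +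
      α * (iotaXi E G g f ^ 2) β = 0 := by
  have hαβ : α * β = 0 := (hα.mul hβ).eq_zero_of_finrank_lt hpq
  rw [← sq_apply_mul_of_leibniz (iotaXi_mul g f), hαβ, map_zero]

/-- If `α` has `E`-degree `p` and `β` has `E`-degree `q` with
`p + q = n + 2`, then `ι_ξ²(α) * β + 2·ι_ξ(α) * ι_ξ(β) + α * ι_ξ²(β) = 0`. -/
theorem iotaXi_sq_top_plus_two [FiniteDimensional ℝ E] [FiniteDimensional ℝ G]
    {k : ℕ} (g : Fin k → G) (f : Fin k → Module.Dual ℝ E)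
    (p q : ℕ) (α β : ExteriorAlgebra ℝ (E × G))
    (hα : HasEDegree E G p α) (hβ : HasEDegree E G q β)
    (hpq : p + q = Module.finrank ℝ E + 2) :
    (iotaXi E G g f ^ 2) α * β + 2 • (iotaXi E G g f α * iotaXi E G g f β) +
      α * (iotaXi E G g f ^ 2) β = 0 :=
  iotaXi_sq_top_plus_two_general E G g f p q α β hα hβ (by lia)
end
end

section
/- Let e : ℝ³ → ℝ³ be an invertible linear map and let × denote the cross product on ℝ³. Then the linear map Φ_e from the space of linear maps ℝ³ →ₗ ℝ³ to the space of alternating bilinear maps ℝ³ × ℝ³ → ℝ³, defined by Φ_e(ω)(u, v) := ω(u) × e(v) − ω(v) × e(u), is a linear isomorphism. (This is the algebraic fact underlying the paper's claim that the Euler–Lagrange equation d_ω e = 0 of 3-dimensional Palatini–Cartan gravity can be uniquely solved for the connection ω = ω(e) when the triad e is nondegenerate, the bracket on the 3-dimensional Lie algebra being identified with the cross product.) -/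
noncomputable section



/-- For an endomorphism `e` of `ℝ³` and `ω : ℝ³ →ₗ ℝ³`, the alternating bilinear map
`(u, v) ↦ ω(u) × e(v) − ω(v) × e(u)`, where `×` is the cross product. -/
def PhiAlt (e ω : (Fin 3 → ℝ) →ₗ[ℝ] (Fin 3 → ℝ)) :
    (Fin 3 → ℝ) [⋀^Fin 2]→ₗ[ℝ] (Fin 3 → ℝ) where
  toFun v := crossProduct (ω (v 0)) (e (v 1)) - crossProduct (ω (v 1)) (e (v 0))
  map_update_add' m i x y := by
    fin_cases i <;>
      simp [Function.update_apply, map_add, LinearMap.add_apply] <;> abel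
  map_update_smul' m i c x := by
    fin_cases i <;>
      simp [Function.update_apply, _root_.map_smul, LinearMap.smul_apply, smul_sub, mul_sub]
  map_eq_zero_of_eq' v i j hv hij := by
    fin_cases i <;> fin_cases j <;> simp_all [sub_eq_zero]

/-- The linear map `Φ_e` from endomorphisms of `ℝ³` to alternating bilinear maps
`ℝ³ × ℝ³ → ℝ³`, `Φ_e(ω)(u, v) = ω(u) × e(v) − ω(v) × e(u)`. -/
def Phi (e : (Fin 3 → ℝ) →ₗ[ℝ] (Fin 3 → ℝ)) :
    ((Fin 3 → ℝ) →ₗ[ℝ] (Fin 3 → ℝ)) →ₗ[ℝ] ((Fin 3 → ℝ) [⋀^Fin 2]→ₗ[ℝ] (Fin 3 → ℝ)) where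
  toFun ω := PhiAlt e ω
  map_add' ω₁ ω₂ := by
    ext v
    simp [PhiAlt, map_add, LinearMap.add_apply]
    abel
  map_smul' c ω := by
    ext v
    simp [PhiAlt, _root_.map_smul, LinearMap.smul_apply, smul_sub, mul_sub]

/-!
Transporting along `e` reduces the claim to `e = id`. For a matrix `A`, the bracket
`A u × v − A v × u = A u × v + u × A v` is the derivation extension of `A` to `Λ² R³`; under the
identification `Λ² R³ ≅ R³` given by the cross product it is the matrix `tr A − Aᵀ`. By the
universal property of `Λ²`, an alternating map `R³ × R³ → R³` is `B (u × v)` for a unique matrix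
`B`, so it remains to solve `tr A − Aᵀ = B`. Taking traces gives `2 tr A = tr B`, whence
`A = (tr B) / 2 − Bᵀ`.
-/

open Matrix

variable {R : Type*} [CommRing R]

/-- The cross product on `R³` as an alternating map in two variables, the shape in which it
enters the factorization of alternating maps `R³ × R³ → M` through `R³`. -/
def crossAlternating : (Fin 3 → R) [⋀^Fin 2]→ₗ[R] (Fin 3 → R) where
  toFun v := v 0 ⨯₃ v 1
  map_update_add' v i x y := by fin_cases i <;> simp
  map_update_smul' v i c x := by fin_cases i <;> simp
  map_eq_zero_of_eq' v i j hv hij := by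
    have h : v 0 = v 1 := by fin_cases i <;> fin_cases j <;> simp_all
    rw [h, cross_self]

lemma single_cross_single (i : Fin 3) :
    Pi.single (i + 1) 1 ⨯₃ Pi.single (i + 2) 1 = (Pi.single i 1 : Fin 3 → R) := by
  ext j
  fin_cases i <;> fin_cases j <;> simp [cross_apply]

lemma linearMap_ext_cross {M : Type*} [AddCommMonoid M] [Module R M]
    {f g : (Fin 3 → R) →ₗ[R] M} (h : ∀ u v, f (u ⨯₃ v) = g (u ⨯₃ v)) : f = g := by
  refine (Pi.basisFun R (Fin 3)).ext fun i => ?_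
  rw [Pi.basisFun_apply, ← single_cross_single, h]

section Alternating

variable {V M : Type*} [AddCommMonoid V] [Module R V] [AddCommGroup M] [Module R M]

lemma alternatingMap_pair_swap (α : V [⋀^Fin 2]→ₗ[R] M) (x y : V) : α ![y, x] = -α ![x, y] := by
  rw [← α.map_swap ![x, y] Fin.zero_ne_one]
  congr 1
  ext k
  fin_cases k <;> rfl

lemma alternatingMap_ext_basis_cyclic (b : Module.Basis (Fin 3) R V) {α β : V [⋀^Fin 2]→ₗ[R] M}
    (h : ∀ i, α ![b (i + 1), b (i + 2)] = β ![b (i + 1), b (i + 2)]) : α = β := by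
  have cyclic (i j : Fin 3) (hij : i ≠ j) :
      ∃ k, (i = k + 1 ∧ j = k + 2) ∨ (j = k + 1 ∧ i = k + 2) := by
    decide +revert
  refine b.ext_alternating fun v hv => ?_
  have pair : (fun i => b (v i)) = ![b (v 0), b (v 1)] := by
    ext i : 1
    fin_cases i <;> rfl
  rw [pair]
  obtain ⟨k, ⟨h0, h1⟩ | ⟨h1, h0⟩⟩ := cyclic (v 0) (v 1) (hv.ne Fin.zero_ne_one)
  · rw [h0, h1, h k]
  · rw [h0, h1, alternatingMap_pair_swap α, alternatingMap_pair_swap β, h k]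

end Alternating

theorem existsUnique_linearMap_cross {M : Type*} [AddCommGroup M] [Module R M]
    (β : (Fin 3 → R) [⋀^Fin 2]→ₗ[R] M) :
    ∃! f : (Fin 3 → R) →ₗ[R] M, ∀ v, f (v 0 ⨯₃ v 1) = β v := by
  let b := Pi.basisFun R (Fin 3)
  let f : (Fin 3 → R) →ₗ[R] M := b.constr R fun i => β ![b (i + 1), b (i + 2)]
  have hf : f.compAlternatingMap crossAlternating = β := by
    refine alternatingMap_ext_basis_cyclic b fun i => ?_
    calc f (b (i + 1) ⨯₃ b (i + 2))
      _ = f (b i) := by simp only [b, Pi.basisFun_apply, single_cross_single]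
      _ = β ![b (i + 1), b (i + 2)] := b.constr_basis ..
  refine ⟨f, DFunLike.congr_fun hf, fun g hg => linearMap_ext_cross fun u v => ?_⟩
  exact (hg ![u, v]).trans (DFunLike.congr_fun hf ![u, v]).symm

lemma mulVec_cross_add_cross_mulVec (A : Matrix (Fin 3) (Fin 3) R) (u v : Fin 3 → R) :
    (A *ᵥ u) ⨯₃ v + u ⨯₃ (A *ᵥ v) = (A.trace • 1 - Aᵀ) *ᵥ (u ⨯₃ v) := by
  ext i
  fin_cases i <;>
    simp [cross_apply, mulVec, dotProduct, Fin.sum_univ_three, trace_fin_three] <;> ring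

lemma bijective_trace_smul_one_sub_transpose {n : Type*} [Fintype n] [DecidableEq n]
    (hn : IsUnit (Fintype.card n - 1 : R)) :
    Function.Bijective fun A : Matrix n n R => A.trace • (1 : Matrix n n R) - Aᵀ := by
  obtain ⟨c, hc⟩ := hn.exists_left_inv
  have trace_eq (s : R) (A : Matrix n n R) :
      (s • (1 : Matrix n n R) - Aᵀ).trace = s * Fintype.card n - A.trace := by
    simp only [trace_sub, trace_smul, trace_one, trace_transpose, smul_eq_mul]
  refine Function.bijective_iff_has_inverse.2
    ⟨fun B => (c * B.trace) • 1 - Bᵀ, fun A => ?_, fun B => ?_⟩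
  · have left_trace : c * (A.trace * Fintype.card n - A.trace) = A.trace := by
      linear_combination A.trace * hc
    simp only [trace_eq, left_trace, transpose_sub, transpose_smul, transpose_one,
      transpose_transpose, sub_sub_cancel]
  · have right_trace : c * B.trace * Fintype.card n - B.trace = c * B.trace := by
      linear_combination B.trace * hc
    simp only [trace_eq, right_trace, transpose_sub, transpose_smul, transpose_one,
      transpose_transpose, sub_sub_cancel]

theorem phi_bijective_general {V : Type*} [AddCommMonoid V] [Module R V] (h2 : IsUnit (2 : R))
    (e : V ≃ₗ[R] (Fin 3 → R)) (β : V [⋀^Fin 2]→ₗ[R] (Fin 3 → R)) :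
    ∃! ω : V →ₗ[R] (Fin 3 → R), ∀ v, ω (v 0) ⨯₃ e (v 1) - ω (v 1) ⨯₃ e (v 0) = β v := by
  let A (ω : V →ₗ[R] (Fin 3 → R)) : Matrix (Fin 3) (Fin 3) R :=
    LinearMap.toMatrix' (ω ∘ₗ e.symm)
  let T (ω : V →ₗ[R] (Fin 3 → R)) : (Fin 3 → R) →ₗ[R] (Fin 3 → R) :=
    toLin' ((A ω).trace • 1 - (A ω)ᵀ)
  have hA : Function.Bijective A :=
    LinearMap.toMatrix'.bijective.comp (e.congrLeft (Fin 3 → R) R).bijective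
  have hT : Function.Bijective T :=
    toLin'.bijective.comp <|
      (bijective_trace_smul_one_sub_transpose (by norm_num [h2])).comp hA
  have bracket_eq (ω : V →ₗ[R] (Fin 3 → R)) (u v : V) :
      ω u ⨯₃ e v - ω v ⨯₃ e u = T ω (e u ⨯₃ e v) := by
    have A_mulVec (w : V) : A ω *ᵥ e w = ω w := by simp [A, LinearMap.toMatrix'_mulVec]
    rw [toLin'_apply, ← mulVec_cross_add_cross_mulVec, A_mulVec, A_mulVec,
      ← cross_anticomm (e u), sub_neg_eq_add]
  have transport (ω : V →ₗ[R] (Fin 3 → R)) :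
      (∀ w, T ω (w 0 ⨯₃ w 1) = β.compLinearMap e.symm.toLinearMap w) ↔
        ∀ v, ω (v 0) ⨯₃ e (v 1) - ω (v 1) ⨯₃ e (v 0) = β v := by
    simp [e.surjective.comp_left.forall, bracket_eq]
  simpa only [transport] using hT.existsUnique_iff.1
    (existsUnique_linearMap_cross (β.compLinearMap e.symm.toLinearMap))

/-- If `e : ℝ³ → ℝ³` is an invertible linear map, then the linear map
`Φ_e : End(ℝ³) → AlternatingMaps(ℝ³ × ℝ³ → ℝ³)`, `Φ_e(ω)(u, v) = ω(u) × e(v) − ω(v) × e(u)`,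
is a linear isomorphism. -/
theorem phi_bijective (e : (Fin 3 → ℝ) →ₗ[ℝ] (Fin 3 → ℝ)) (he : Function.Bijective e) :
    (∀ (ω : (Fin 3 → ℝ) →ₗ[ℝ] (Fin 3 → ℝ)) (u v : Fin 3 → ℝ),
        Phi e ω ![u, v] = crossProduct (ω u) (e v) - crossProduct (ω v) (e u)) ∧
      Function.Bijective (Phi e) := by
  refine ⟨fun _ _ _ => rfl, (Function.bijective_iff_existsUnique _).2 fun β => ?_⟩
  simpa only [AlternatingMap.ext_iff] using!
    phi_bijective_general two_ne_zero.isUnit (.ofBijective e he) β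
end
end
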